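/- arXiv:1304.6059 — 2 statements merged into one kernel-verified Lean document; each statement's English description precedes it below -/
import Mathlib

section
/- Let C be a triangulated category, B a weakly negative set of objects of C, and 𝔻 the triangulated subcategory of C generated by B. Let X be an object of C with Hom(X, Z) = 0 for all Z ∈ B_{≥1}, and Y an object of C with Hom(Z, Y) = 0 for all Z ∈ B_{≤ −1}. Then the map C(X, Y) → (C/𝔻)(X, Y) induced by the Verdier localization functor is surjective. -/
open CategoryTheory Limits Pretriangulated ZeroObject

universe v u v' u'

section TriangulatedPrelude

variable {C : Type u} [Category.{v} C] [HasZeroObject C] [HasShift C ℤ] [Preadditive C]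
  [∀ n : ℤ, (shiftFunctor C n).Additive] [Pretriangulated C]

/-- The objects of the smallest strict full triangulated subcategory of `C`
containing the set of objects `B`. -/
inductive genSub (B : Set C) : C → Prop
  | of (X : C) (hX : X ∈ B) : genSub B X
  | zero (X : C) (hX : IsZero X) : genSub B X
  | shift (X : C) (n : ℤ) (hX : genSub B X) : genSub B (X⟦n⟧)
  | ext₂ (T : Triangle C) (hT : T ∈ distTriang C) (h₁ : genSub B T.obj₁)
      (h₃ : genSub B T.obj₃) : genSub B T.obj₂

/-- The triangulated subcategory of `C` generated by `B`. -/
def genSubcat (B : Set C) : ObjectProperty C :=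
  genSub B

instance (B : Set C) : (genSubcat B).IsTriangulated where
  exists_zero := ⟨0, isZero_zero C, genSub.zero _ (isZero_zero _)⟩
  isStableUnderShiftBy n := ⟨fun X h => genSub.shift X n h⟩
  ext₂' T hT h₁ h₃ := ObjectProperty.le_isoClosure _ _ (genSub.ext₂ T hT h₁ h₃)

/-- The extension-closure of a class of objects `E`: the smallest class containing `E`
and `0` and such that for any distinguished triangle `X ⟶ Y ⟶ Z` with `X, Z` in the
class, `Y` is also in the class. -/
inductive extClosure (E : Set C) : C → Prop
  | of (X : C) (hX : X ∈ E) : extClosure E X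
  | zero (X : C) (hX : IsZero X) : extClosure E X
  | ext₂ (T : Triangle C) (hT : T ∈ distTriang C) (h₁ : extClosure E T.obj₁)
      (h₃ : extClosure E T.obj₃) : extClosure E T.obj₂

/-- `D_{[i,j]}`: the extension-closure of `∪_{i ≤ l ≤ j} D[l]`. -/
def shiftClosure (D : Set C) (i j : ℤ) : Set C :=
  extClosure {X | ∃ (Y : C) (l : ℤ), i ≤ l ∧ l ≤ j ∧ Y ∈ D ∧ X = Y⟦l⟧}

/-- `D_{≥ i} = ∪_{k ≥ i} D_{[i,k]}`. -/
def shiftClosureGE (D : Set C) (i : ℤ) : Set C := {X | ∃ k, i ≤ k ∧ X ∈ shiftClosure D i k}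

/-- `D_{≤ j} = ∪_{k ≤ j} D_{[k,j]}`. -/
def shiftClosureLE (D : Set C) (j : ℤ) : Set C := {X | ∃ k, k ≤ j ∧ X ∈ shiftClosure D k j}

/-- A set of objects `D` is weakly negative if `0 ∈ D` and `Hom(X, Y[i]) = 0`
for all `X, Y ∈ D` and all `i ≥ 2`. -/
def WeaklyNegative (D : Set C) : Prop :=
  (0 : C) ∈ D ∧ ∀ X ∈ D, ∀ Y ∈ D, ∀ i : ℤ, 2 ≤ i → ∀ f : X ⟶ (Y⟦i⟧), f = 0

end TriangulatedPrelude

section Helpers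

variable {C : Type u} [Category.{v} C] [HasZeroObject C] [HasShift C ℤ] [Preadditive C]
  [∀ n : ℤ, (shiftFunctor C n).Additive] [Pretriangulated C]

/-- Shifts of `B` by `l` in `S`. -/
def gens (B : Set C) (S : ℤ → Prop) : Set C := {X | ∃ (Y : C) (l : ℤ), S l ∧ Y ∈ B ∧ X = Y⟦l⟧}

/-- The extension closure as an object property. -/
def ec (B : Set C) (S : ℤ → Prop) : ObjectProperty C := extClosure (gens B S)

lemma ec_prod (B : Set C) (S : ℤ → Prop) :
    (ec B S).extensionProduct (ec B S) ≤ ec B S := by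
  rintro X ⟨Y, Z, f, g, h, hT, hY, hZ⟩
  exact extClosure.ext₂ _ hT hY hZ

lemma ec_out {E : Set C} {X : C} (hX : ∀ Z ∈ E, ∀ f : X ⟶ Z, f = 0) {Z : C}
    (hZ : extClosure E Z) : ∀ f : X ⟶ Z, f = 0 := by
  induction hZ with
  | of Z h => exact hX Z h
  | zero Z h => exact fun f => h.eq_of_tgt _ _
  | ext₂ T hT _ _ h₁ h₃ =>
    intro f
    obtain ⟨g, rfl⟩ := Triangle.coyoneda_exact₂ _ hT f (h₃ _)
    rw [h₁ g, zero_comp]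

lemma ec_in {E : Set C} {Y : C} (n : ℤ) (hY : ∀ Z ∈ E, ∀ f : Z⟦n⟧ ⟶ Y, f = 0) {Z : C}
    (hZ : extClosure E Z) : ∀ f : Z⟦n⟧ ⟶ Y, f = 0 := by
  induction hZ with
  | of Z h => exact hY Z h
  | zero Z h => exact fun f => (Functor.map_isZero _ h).eq_of_src _ _
  | ext₂ T hT _ _ h₁ h₃ =>
    intro f
    obtain ⟨g, rfl⟩ := Triangle.yoneda_exact₂ _ (Triangle.shift_distinguished _ hT n) f (h₁ _)
    have hg : g = 0 := h₃ g
    rw [hg]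
    exact comp_zero

lemma gens_hom {B : Set C} (hB : WeaklyNegative B) {Z A : C}
    (hZ : ec B (· ≤ 0) Z) (hA : ec B (1 ≤ ·) A) (f : Z⟦(-1 : ℤ)⟧ ⟶ A) : f = 0 := by
  revert f
  refine ec_out ?_ hA
  rintro _ ⟨b, m, hm, hb, rfl⟩
  refine ec_in (-1) ?_ hZ
  rintro _ ⟨c, l, hl, hc, rfl⟩ f
  let e := (shiftFunctorAdd' C l (-1) (l - 1) (by omega)).app c
  let e' := (shiftFunctorAdd' C (m - l + 1) (l - 1) m (by omega)).app b
  obtain ⟨g, hg⟩ := (shiftFunctor C (l - 1)).map_surjective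
    (X := c) (Y := b⟦m - l + 1⟧) (e.hom ≫ f ≫ e'.hom)
  rw [hB.2 c hc b hb _ (by omega) g, Functor.map_zero] at hg
  rw [← cancel_epi e.hom, ← cancel_mono e'.hom]
  simpa using hg.symm

lemma ec_swap {B : Set C} (hB : WeaklyNegative B) :
    (ec B (1 ≤ ·)).extensionProduct (ec B (· ≤ 0)) ≤
      (ec B (· ≤ 0)).extensionProduct (ec B (1 ≤ ·)) := by
  rintro X ⟨Y, Z, f, g, h, hT, hY, hZ⟩
  have h0 : h = 0 := by
    let e := (shiftFunctorCompIsoId C (1 : ℤ) (-1) (by omega)).app Y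
    have := gens_hom hB hZ hY (h⟦(-1 : ℤ)⟧' ≫ e.hom)
    have h2 : h⟦(-1 : ℤ)⟧' = 0 := by
      rw [← cancel_mono e.hom, this, zero_comp]
    exact (Functor.map_eq_zero_iff (shiftFunctor C (-1 : ℤ))).1 h2
  obtain ⟨e, -, -⟩ := exists_iso_binaryBiproduct_of_distTriang _ hT h0
  refine ObjectProperty.prop_of_iso _ (biprod.braiding Z Y ≪≫ e.symm) ?_
  exact ⟨_, _, _, _, _, binaryBiproductTriangle_distinguished Z Y, hZ, hY⟩

instance (B : Set C) (S : ℤ → Prop) : (ec B S).ContainsZero where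
  exists_zero := ⟨0, isZero_zero C, extClosure.zero _ (isZero_zero _)⟩

lemma ext_closed [IsTriangulated C] {B : Set C} (hB : WeaklyNegative B) :
    ((ec B (· ≤ 0)).extensionProduct (ec B (1 ≤ ·))).extensionProduct
      ((ec B (· ≤ 0)).extensionProduct (ec B (1 ≤ ·))) ≤
      (ec B (· ≤ 0)).extensionProduct (ec B (1 ≤ ·)) := by
  set P := ec B (· ≤ 0)
  set Q := ec B (1 ≤ ·)
  have h1 : (P.extensionProduct Q).extensionProduct (P.extensionProduct Q) =
      P.extensionProduct ((Q.extensionProduct P).extensionProduct Q) := by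
    simp only [ObjectProperty.extensionProduct_assoc]
  have h2 : P.extensionProduct ((P.extensionProduct Q).extensionProduct Q) =
      (P.extensionProduct P).extensionProduct (Q.extensionProduct Q) := by
    simp only [ObjectProperty.extensionProduct_assoc]
  rw [h1]
  refine (ObjectProperty.monotone_extensionProduct_right _
    (ObjectProperty.monotone_extensionProduct_left _ (ec_swap hB))).trans ?_
  rw [h2]
  exact (ObjectProperty.monotone_extensionProduct_right _ (ec_prod B _)).trans
    (ObjectProperty.monotone_extensionProduct_left _ (ec_prod B _))

lemma genSub_dec [IsTriangulated C] {B : Set C} (hB : WeaklyNegative B) {Z : C}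
    (hZ : genSub B Z) (n : ℤ) :
    (ec B (· ≤ 0)).extensionProduct (ec B (1 ≤ ·)) (Z⟦n⟧) := by
  induction hZ generalizing n with
  | of X hX =>
    by_cases hn : n ≤ 0
    · exact ObjectProperty.le_extensionProduct_left _ _ (extClosure.of _ ⟨X, n, hn, hX, rfl⟩)
    · exact ObjectProperty.le_extensionProduct_right _ _
        (extClosure.of _ ⟨X, n, by omega, hX, rfl⟩)
  | zero X hX =>
    exact ObjectProperty.le_extensionProduct_left _ _
      (extClosure.zero _ (Functor.map_isZero _ hX))
  | shift X m _ ih =>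
    exact ObjectProperty.prop_of_iso _ ((shiftFunctorAdd C m n).app X) (ih (m + n))
  | ext₂ T hT _ _ h₁ h₃ =>
    exact ext_closed hB _ ⟨_, _, _, _, _, Triangle.shift_distinguished _ hT n, h₁ n, h₃ n⟩

lemma ec_genSub {B : Set C} {S : ℤ → Prop} {Z : C} (hZ : ec B S Z) : genSub B Z := by
  induction hZ with
  | of X h =>
    obtain ⟨b, l, -, hb, rfl⟩ := h
    exact genSub.shift _ _ (genSub.of _ hb)
  | zero X h => exact genSub.zero _ h
  | ext₂ T hT _ _ h₁ h₃ => exact genSub.ext₂ T hT h₁ h₃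

end Helpers

/-- Proposition: under the given orthogonality assumptions, the localization functor
induces a surjection `C(X, Y) → (C/𝔻)(X, Y)`. -/
theorem statement7 {C : Type u} [Category.{v} C] [HasZeroObject C] [HasShift C ℤ]
    [Preadditive C] [∀ n : ℤ, (shiftFunctor C n).Additive] [Pretriangulated C]
    [IsTriangulated C] (B : Set C) (hB : WeaklyNegative B) (X Y : C)
    (hX : ∀ Z ∈ shiftClosureGE B 1, ∀ f : X ⟶ Z, f = 0)
    (hY : ∀ Z ∈ shiftClosureLE B (-1), ∀ f : Z ⟶ Y, f = 0) :
    ∀ e : (genSubcat B).trW.Q.obj X ⟶ (genSubcat B).trW.Q.obj Y,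
      ∃ f : X ⟶ Y, (genSubcat B).trW.Q.map f = e := by
  intro e
  obtain ⟨φ, rfl⟩ := Localization.exists_rightFraction (genSubcat B).trW.Q (genSubcat B).trW e
  obtain ⟨Z, g, h, H, mem⟩ := φ.hs
  obtain ⟨A, A', a, b, c, hA, memA, memA'⟩ := ObjectProperty.prop_of_iso _
    ((shiftFunctorZero C ℤ).app Z) (genSub_dec hB mem 0)
  have hX' : ∀ f : X ⟶ A', f = 0 := by
    refine ec_out ?_ memA'
    rintro _ ⟨d, l, hl, hd, rfl⟩
    exact hX _ ⟨l, hl, extClosure.of _ ⟨d, l, hl, le_rfl, hd, rfl⟩⟩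
  have hY' : ∀ f : A⟦(-1 : ℤ)⟧ ⟶ Y, f = 0 := by
    refine ec_in (-1) ?_ memA
    rintro _ ⟨d, l, hl, hd, rfl⟩ f
    let i := (shiftFunctorAdd' C l (-1) (l - 1) (by omega)).app d
    rw [← cancel_epi i.hom, comp_zero]
    exact hY (d⟦l - 1⟧) ⟨l - 1, by omega, extClosure.of _ ⟨d, l - 1, le_rfl, by omega, hd, rfl⟩⟩ _
  obtain ⟨q, hq⟩ : ∃ q : X ⟶ A, g = q ≫ a := Triangle.coyoneda_exact₂ _ hA g (hX' _)
  obtain ⟨X'', t, w, hT⟩ := distinguished_cocone_triangle₁ q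
  have htq : t ≫ q = 0 := comp_distTriang_mor_zero₁₂ _ hT
  obtain ⟨r, hr⟩ : ∃ r : X'' ⟶ φ.X', t = r ≫ φ.s :=
    Triangle.coyoneda_exact₂ _ H t (by
      change t ≫ g = 0
      rw [hq, reassoc_of% htq, zero_comp])
  obtain ⟨f', hf'⟩ : ∃ f' : X ⟶ Y, r ≫ φ.f = t ≫ f' :=
    Triangle.yoneda_exact₂ _ (inv_rot_of_distTriang _ hT) (r ≫ φ.f) (hY' _)
  have ht : (genSubcat B).trW t := ⟨_, _, _, hT, ec_genSub memA⟩
  have := Localization.inverts (genSubcat B).trW.Q (genSubcat B).trW t ht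
  refine ⟨f', ?_⟩
  rw [← cancel_epi ((genSubcat B).trW.Q.map t), ← Functor.map_comp, ← hf', hr]
  simp only [Functor.map_comp, Category.assoc,
    MorphismProperty.RightFraction.map_s_comp_map]
end

section
/- Let C be a triangulated category with a weight structure w, let B be a set of objects of C_{[0,1]}, and let 𝔻 be the triangulated subcategory of C generated by B. Then the classes of objects of the Verdier quotient C/𝔻 given by all retracts (in C/𝔻) of objects of C_{w≤0}, respectively all retracts of objects of C_{w≥0}, form a weight structure on C/𝔻; in particular, the localization functor C → C/𝔻 is weight-exact (it sends C_{w≤0} into (C/𝔻)_{w≤0} and C_{w≥0} into (C/𝔻)_{w≥0}). -/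
open CategoryTheory Limits Pretriangulated ZeroObject

universe v u v' u'

section TriangulatedPrelude

variable {C : Type u} [Category.{v} C] [HasZeroObject C] [HasShift C ℤ] [Preadditive C]
  [∀ n : ℤ, (shiftFunctor C n).Additive] [Pretriangulated C]

instance genSubcat_isTriangulated (B : Set C) : (genSubcat B).IsTriangulated where
  exists_zero := ⟨0, isZero_zero _, genSub.zero _ (isZero_zero _)⟩
  isStableUnderShiftBy n := ⟨fun X h => genSub.shift X n h⟩
  ext₂' := fun T hT h₁ h₃ =>
    ObjectProperty.le_isoClosure _ _ (genSub.ext₂ T hT h₁ h₃)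

end TriangulatedPrelude

section WeightStructurePrelude

variable (C : Type u) [Category.{v} C] [HasZeroObject C] [HasShift C ℤ] [Preadditive C]
  [∀ n : ℤ, (shiftFunctor C n).Additive] [Pretriangulated C]

/-- A weight structure on a (pre)triangulated category `C` (homological convention):
two retract-closed classes of objects `LE = C_{w≤0}` and `GE = C_{w≥0}` such that
`C_{w≤0} ⊆ C_{w≤0}[1]`, `C_{w≥0}[1] ⊆ C_{w≥0}`, `Hom(C_{w≤0}, C_{w≥0}[1]) = 0`, and every
object `M` admits a weight decomposition `X ⟶ M ⟶ Y ⟶ X[1]` with `X ∈ C_{w≤0}`,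
`Y ∈ C_{w≥0}[1]`. -/
structure WeightStructure where
  /-- the class `C_{w≤0}` -/
  LE : Set C
  /-- the class `C_{w≥0}` -/
  GE : Set C
  retract_LE : ∀ ⦃X Y : C⦄, Y ∈ LE → ∀ (i : X ⟶ Y) (r : Y ⟶ X), i ≫ r = 𝟙 X → X ∈ LE
  retract_GE : ∀ ⦃X Y : C⦄, Y ∈ GE → ∀ (i : X ⟶ Y) (r : Y ⟶ X), i ≫ r = 𝟙 X → X ∈ GE
  shift_LE : ∀ X ∈ LE, X⟦(-1 : ℤ)⟧ ∈ LE
  shift_GE : ∀ X ∈ GE, X⟦(1 : ℤ)⟧ ∈ GE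
  orthogonality : ∀ X ∈ LE, ∀ Y ∈ GE, ∀ f : X ⟶ (Y⟦(1 : ℤ)⟧), f = 0
  decomposition : ∀ M : C, ∃ (X Y : C) (a : X ⟶ M) (b : M ⟶ Y) (c : Y ⟶ X⟦(1 : ℤ)⟧),
    (Triangle.mk a b c ∈ distTriang C) ∧ X ∈ LE ∧ Y⟦(-1 : ℤ)⟧ ∈ GE

variable {C}

/-- The class `C_{w=0} = C_{w≤0} ∩ C_{w≥0}` of objects of the heart. -/
def WeightStructure.heart (w : WeightStructure C) : Set C := w.LE ∩ w.GE

/-- The class `C_{[0,1]} = C_{w≥0} ∩ C_{w≤1}`. -/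
def WeightStructure.zeroOne (w : WeightStructure C) : Set C :=
  {X | X ∈ w.GE ∧ X⟦(-1 : ℤ)⟧ ∈ w.LE}

end WeightStructurePrelude

section Aux

variable {C : Type u} [Category.{v} C] [HasZeroObject C] [HasShift C ℤ] [Preadditive C]
  [∀ n : ℤ, (shiftFunctor C n).Additive] [Pretriangulated C] (w : WeightStructure C)

namespace WeightStructure

def le (n : ℤ) : ObjectProperty C := fun X => X⟦(-n)⟧ ∈ w.LE
def ge (n : ℤ) : ObjectProperty C := fun X => X⟦(-n)⟧ ∈ w.GE

lemma LE_iso {X Y : C} (e : X ≅ Y) (h : X ∈ w.LE) : Y ∈ w.LE :=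
  w.retract_LE h e.inv e.hom (by simp)
lemma GE_iso {X Y : C} (e : X ≅ Y) (h : X ∈ w.GE) : Y ∈ w.GE :=
  w.retract_GE h e.inv e.hom (by simp)

lemma le_zero_iff (X : C) : w.le 0 X ↔ X ∈ w.LE := by
  have e : X⟦(-0 : ℤ)⟧ ≅ X := (shiftFunctorZero' C (-0 : ℤ) (by simp)).app X
  exact ⟨w.LE_iso e, w.LE_iso e.symm⟩

lemma ge_zero_iff (X : C) : w.ge 0 X ↔ X ∈ w.GE := by
  have e : X⟦(-0 : ℤ)⟧ ≅ X := (shiftFunctorZero' C (-0 : ℤ) (by simp)).app X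
  exact ⟨w.GE_iso e, w.GE_iso e.symm⟩

lemma le_shift (X : C) (a n m : ℤ) (h : m + a = n) : w.le n (X⟦a⟧) ↔ w.le m X := by
  have e := (shiftFunctorAdd' C a (-n) (-m) (by lia)).app X
  exact ⟨w.LE_iso e.symm, w.LE_iso e⟩

lemma ge_shift (X : C) (a n m : ℤ) (h : m + a = n) : w.ge n (X⟦a⟧) ↔ w.ge m X := by
  have e := (shiftFunctorAdd' C a (-n) (-m) (by lia)).app X
  exact ⟨w.GE_iso e.symm, w.GE_iso e⟩

lemma le_retract {n : ℤ} {X Y : C} (h : w.le n Y) (i : X ⟶ Y) (r : Y ⟶ X) (hi : i ≫ r = 𝟙 X) :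
    w.le n X :=
  w.retract_LE h (i⟦(-n)⟧') (r⟦(-n)⟧') (by rw [← Functor.map_comp, hi, CategoryTheory.Functor.map_id])

lemma ge_retract {n : ℤ} {X Y : C} (h : w.ge n Y) (i : X ⟶ Y) (r : Y ⟶ X) (hi : i ≫ r = 𝟙 X) :
    w.ge n X :=
  w.retract_GE h (i⟦(-n)⟧') (r⟦(-n)⟧') (by rw [← Functor.map_comp, hi, CategoryTheory.Functor.map_id])

lemma le_succ {n : ℤ} {X : C} (h : w.le n X) : w.le (n + 1) X := by
  have h1 := w.shift_LE _ h
  exact w.LE_iso ((shiftFunctorAdd' C (-n) (-1) (-(n+1)) (by lia)).app X).symm h1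

lemma ge_pred {n : ℤ} {X : C} (h : w.ge (n + 1) X) : w.ge n X := by
  have h1 := w.shift_GE _ h
  exact w.GE_iso ((shiftFunctorAdd' C (-(n+1)) 1 (-n) (by lia)).app X).symm h1

lemma le_mono {n m : ℤ} (hnm : n ≤ m) {X : C} (h : w.le n X) : w.le m X := by
  induction m, hnm using Int.leInduction with
  | base => exact h
  | succ k hk ih => exact w.le_succ ih

lemma ge_mono {n m : ℤ} (hnm : n ≤ m) {X : C} (h : w.ge m X) : w.ge n X := by
  induction m, hnm using Int.leInduction with
  | base => exact h
  | succ k hk ih => exact ih (w.ge_pred h)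

lemma orth {n m : ℤ} (hnm : n < m) {X Y : C} (hX : w.le n X) (hY : w.ge m Y) (f : X ⟶ Y) :
    f = 0 := by
  have hY1 : w.ge (n + 1) Y := w.ge_mono (by lia) hY
  let e : Y⟦(-n)⟧ ≅ Y⟦(-(n+1))⟧⟦(1 : ℤ)⟧ :=
    (shiftFunctorAdd' C (-(n+1)) 1 (-n) (by lia)).app Y
  have h := w.orthogonality _ hX _ hY1 (f⟦(-n)⟧' ≫ e.hom)
  have h2 : f⟦(-n)⟧' = 0 := by
    rw [← cancel_mono e.hom, h, zero_comp]
  exact (shiftFunctor C (-n)).map_injective (by rw [h2, Functor.map_zero])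

lemma decomp (M : C) : ∃ (X Y : C) (a : X ⟶ M) (b : M ⟶ Y) (c : Y ⟶ X⟦(1 : ℤ)⟧),
    (Triangle.mk a b c ∈ distTriang C) ∧ w.le 0 X ∧ w.ge 1 Y := by
  obtain ⟨X, Y, a, b, c, h, hX, hY⟩ := w.decomposition M
  exact ⟨X, Y, a, b, c, h, (w.le_zero_iff X).2 hX, hY⟩

lemma le_of_orth (X : C) (h : ∀ Y, w.ge 1 Y → ∀ f : X ⟶ Y, f = 0) : w.le 0 X := by
  obtain ⟨A, Y, a, b, c, hT, hA, hY⟩ := w.decomp X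
  obtain ⟨i, hi⟩ := Triangle.coyoneda_exact₂ _ hT (𝟙 X) (by
    change 𝟙 X ≫ b = 0
    rw [h _ hY b, comp_zero])
  exact w.le_retract hA i a hi.symm

lemma ge_of_orth (Y : C) (h : ∀ X, w.le 0 X → ∀ f : X ⟶ Y, f = 0) : w.ge 1 Y := by
  obtain ⟨A, B, a, b, c, hT, hA, hB⟩ := w.decomp Y
  obtain ⟨r, hr⟩ := Triangle.yoneda_exact₂ _ hT (𝟙 Y) (by
    change a ≫ 𝟙 Y = 0
    rw [h _ hA a, zero_comp])
  exact w.ge_retract hB b r hr.symm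

lemma le_ext (n : ℤ) (T : Triangle C) (hT : T ∈ distTriang C) (h₁ : w.le n T.obj₁)
    (h₃ : w.le n T.obj₃) : w.le n T.obj₂ := by
  rw [← w.le_shift _ (-n) 0 n (by lia)] at h₁ h₃ ⊢
  refine w.le_of_orth _ fun Y hY f => ?_
  obtain ⟨g, hg⟩ := Triangle.yoneda_exact₂ _ (Triangle.shift_distinguished T hT (-n)) f
    (w.orth (by lia) h₁ hY _)
  have hg0 : g = 0 := w.orth (by lia) h₃ hY g
  rw [hg, hg0]
  exact comp_zero

lemma ge_ext (n : ℤ) (T : Triangle C) (hT : T ∈ distTriang C) (h₁ : w.ge n T.obj₁)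
    (h₃ : w.ge n T.obj₃) : w.ge n T.obj₂ := by
  rw [← w.ge_shift _ (1-n) 1 n (by lia)] at h₁ h₃ ⊢
  refine w.ge_of_orth _ fun Y hY f => ?_
  obtain ⟨g, hg⟩ := Triangle.coyoneda_exact₂ _ (Triangle.shift_distinguished T hT (1-n)) f
    (w.orth (by lia) hY h₃ _)
  have hg0 : g = 0 := w.orth (by lia) hY h₁ g
  rw [hg, hg0]
  exact zero_comp

lemma dist_iso_mid {X M M' Y : C} (e : M ≅ M') (a : X ⟶ M) (b : M ⟶ Y) (c : Y ⟶ X⟦(1 : ℤ)⟧)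
    (h : Triangle.mk a b c ∈ distTriang C) :
    Triangle.mk (a ≫ e.hom) (e.inv ≫ b) c ∈ distTriang C := by
  refine isomorphic_distinguished _ h _
    (Triangle.isoMk _ _ (Iso.refl _) e.symm (Iso.refl _) ?_ ?_ ?_)
  · change (a ≫ e.hom) ≫ e.inv = 𝟙 _ ≫ a
    simp
  · change (e.inv ≫ b) ≫ 𝟙 _ = e.inv ≫ b
    simp
  · change c ≫ (𝟙 X)⟦(1 : ℤ)⟧' = 𝟙 _ ≫ c
    simp

lemma le_zero_obj (n : ℤ) {X : C} (hX : IsZero X) : w.le n X := by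
  rw [← w.le_shift _ (-n) 0 n (by lia)]
  exact w.le_of_orth _ fun Y _ f => ((shiftFunctor C (-n)).map_isZero hX).eq_of_src _ _

lemma ge_zero_obj (n : ℤ) {X : C} (hX : IsZero X) : w.ge n X := by
  rw [← w.ge_shift _ (1-n) 1 n (by lia)]
  exact w.ge_of_orth _ fun Y _ f => ((shiftFunctor C (1-n)).map_isZero hX).eq_of_tgt _ _

def L (B : Set C) (j : ℤ) : ObjectProperty C := fun X => genSub B X ∧ w.le (j+1) X
def R (B : Set C) (j : ℤ) : ObjectProperty C := fun X => genSub B X ∧ w.ge (j+1) X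

open ObjectProperty

lemma LL (B : Set C) (j : ℤ) : extensionProduct (w.L B j) (w.L B j) ≤ w.L B j := by
  rintro X ⟨A, D, f, g, h, hT, hA, hD⟩
  exact ⟨genSub.ext₂ _ hT hA.1 hD.1, w.le_ext _ _ hT hA.2 hD.2⟩

lemma RR (B : Set C) (j : ℤ) : extensionProduct (w.R B j) (w.R B j) ≤ w.R B j := by
  rintro X ⟨A, D, f, g, h, hT, hA, hD⟩
  exact ⟨genSub.ext₂ _ hT hA.1 hD.1, w.ge_ext _ _ hT hA.2 hD.2⟩

lemma RL (B : Set C) (j : ℤ) :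
    extensionProduct (w.R B j) (w.L B j) ≤ extensionProduct (w.L B j) (w.R B j) := by
  rintro X ⟨A, D, f, g, h, hT, hA, hD⟩
  have h0 : h = 0 := w.orth (n := j + 1) (m := j + 2) (by lia) hD.2
    ((w.ge_shift A 1 (j+2) (j+1) (by lia)).2 hA.2) h
  obtain ⟨e, _⟩ := exists_iso_binaryBiproduct_of_distTriang _ hT h0
  have hp : extensionProduct (w.L B j) (w.R B j) (D ⨯ A) :=
    ⟨D, A, _, _, _, binaryProductTriangle_distinguished D A, hD, hA⟩
  refine prop_of_iso _ ?_ hp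
  exact (prod.braiding D A) ≪≫ (biprod.isoProd A D).symm ≪≫ e.symm

lemma LRLR [IsTriangulated C] (B : Set C) (j : ℤ) :
    extensionProduct (extensionProduct (w.L B j) (w.R B j))
      (extensionProduct (w.L B j) (w.R B j)) ≤ extensionProduct (w.L B j) (w.R B j) := by
  rw [extensionProduct_assoc, ← extensionProduct_assoc (w.R B j)]
  refine (monotone_extensionProduct_right _ (monotone_extensionProduct_left _ (w.RL B j))).trans ?_
  rw [extensionProduct_assoc, ← extensionProduct_assoc]
  exact (monotone_extensionProduct_right _ (w.RR B j)).trans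
    (monotone_extensionProduct_left _ (w.LL B j))

lemma genSub_decomp [IsTriangulated C] (B : Set C) (hB : B ⊆ w.zeroOne) (D : C)
    (hD : genSub B D) : ∀ j : ℤ, extensionProduct (w.L B j) (w.R B j) D := by
  have left : ∀ (j : ℤ) (X : C), w.L B j X → extensionProduct (w.L B j) (w.R B j) X :=
    fun j X hX => ⟨X, 0, _, _, _, contractible_distinguished X, hX,
      genSub.zero _ (isZero_zero _), w.ge_zero_obj _ (isZero_zero _)⟩
  have right : ∀ (j : ℤ) (X : C), w.R B j X → extensionProduct (w.L B j) (w.R B j) X :=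
    fun j X hX => ⟨0, X, _, _, _, contractible_distinguished₁ X,
      ⟨genSub.zero _ (isZero_zero _), w.le_zero_obj _ (isZero_zero _)⟩, hX⟩
  induction hD with
  | of X hX =>
    intro j
    by_cases hj : 0 ≤ j
    · refine left _ _ ⟨genSub.of _ hX, w.le_mono (n := 1) (by lia) (hB hX).2⟩
    · refine right _ _ ⟨genSub.of _ hX, w.ge_mono (m := 0) (by lia)
        ((w.ge_zero_iff X).2 (hB hX).1)⟩
  | zero X hX => exact fun j => left _ _ ⟨genSub.zero _ hX, w.le_zero_obj _ hX⟩
  | shift X n hX ih =>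
    intro j
    obtain ⟨A, D, f, g, h, hT, hA, hD⟩ := ih (j - n)
    exact ⟨A⟦n⟧, D⟦n⟧, _, _, _, Triangle.shift_distinguished _ hT n,
      ⟨genSub.shift _ _ hA.1, (w.le_shift _ n _ _ (by lia)).2 hA.2⟩,
      ⟨genSub.shift _ _ hD.1, (w.ge_shift _ n _ _ (by lia)).2 hD.2⟩⟩
  | ext₂ T hT h₁ h₃ ih₁ ih₃ =>
    intro j
    exact w.LRLR B j _ ⟨T.obj₁, T.obj₃, _, _, _, hT, ih₁ j, ih₃ j⟩

lemma Q_isZero [IsTriangulated C] (B : Set C) (D : C) (hD : genSub B D) :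
    IsZero ((genSubcat B).trW.Q.obj D) := by
  have hW : (genSubcat B).trW (0 : D ⟶ 0) := by
    rw [ObjectProperty.trW_iff']
    exact ⟨_, _, _, contractible_distinguished D, hD⟩
  have := Localization.inverts (genSubcat B).trW.Q (genSubcat B).trW _ hW
  exact ((genSubcat B).trW.Q.map_isZero (isZero_zero C)).of_iso
    (asIso ((genSubcat B).trW.Q.map (0 : D ⟶ 0)))

lemma Q_orth [IsTriangulated C] (B : Set C) (hB : B ⊆ w.zeroOne) {X Y : C}
    (hX : w.le 0 X) (hY : w.ge 1 Y)
    (f : (genSubcat B).trW.Q.obj X ⟶ (genSubcat B).trW.Q.obj Y) : f = 0 := by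
  obtain ⟨φ, rfl⟩ := Localization.exists_leftFraction (genSubcat B).trW.Q (genSubcat B).trW f
  obtain @⟨Z, g, s, hs⟩ := φ
  have hs' := hs
  rw [ObjectProperty.trW_iff] at hs'
  obtain ⟨D, p, q, hT, hD⟩ := hs'
  obtain ⟨D1, D2, a, b, c, hT', hD1, hD2⟩ := w.genSub_decomp B hB D hD 0
  obtain ⟨x, hx⟩ := Triangle.coyoneda_exact₂ _ hT' (g ≫ p) (w.orth (by lia) hX hD2.2 _)
  obtain ⟨l, hl⟩ := Triangle.coyoneda_exact₃ _ hT a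
    (w.orth (n := 1) (m := 2) (by lia) hD1.2 ((w.ge_shift Y 1 2 1 (by lia)).2 hY) _)
  change X ⟶ D1 at x
  change g ≫ p = x ≫ a at hx
  change D1 ⟶ Z at l
  change a = l ≫ p at hl
  obtain ⟨y, hy⟩ := Triangle.coyoneda_exact₂ _ hT (g - x ≫ l) (by
    change (g - x ≫ l) ≫ p = 0
    rw [Preadditive.sub_comp, Category.assoc, ← hl, hx, sub_self])
  change X ⟶ Y at y
  change g - x ≫ l = y ≫ s at hy
  rw [w.orth (by lia) hX hY y, zero_comp, sub_eq_zero] at hy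
  have hg : (genSubcat B).trW.Q.map g = 0 := by
    rw [hy, Functor.map_comp, (Q_isZero B D1 hD1.1).eq_of_tgt ((genSubcat B).trW.Q.map x) 0,
      zero_comp]
  have := Localization.inverts (genSubcat B).trW.Q (genSubcat B).trW s hs
  rw [← cancel_mono ((genSubcat B).trW.Q.map s), zero_comp]
  exact (MorphismProperty.LeftFraction.map_comp_map_s _ _ _).trans hg

end WeightStructure

end Aux

/-- Theorem: the retract-closures (in the Verdier quotient `C/𝔻`) of `C_{w≤0}` and of
`C_{w≥0}` form a weight structure on `C/𝔻`, and the localization functor is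
weight-exact. Here `𝔻` is generated by a set of objects `B ⊆ C_{[0,1]}`. -/
theorem statement17 {C : Type u} [Category.{v} C] [HasZeroObject C] [HasShift C ℤ]
    [Preadditive C] [∀ n : ℤ, (shiftFunctor C n).Additive] [Pretriangulated C]
    [IsTriangulated C] (w : WeightStructure C) (B : Set C) (hB : B ⊆ w.zeroOne) :
    ∃ w' : WeightStructure ((genSubcat B).trW.Localization),
      w'.LE = {X | ∃ Y ∈ w.LE, ∃ (i : X ⟶ (genSubcat B).trW.Q.obj Y)
          (r : (genSubcat B).trW.Q.obj Y ⟶ X), i ≫ r = 𝟙 X} ∧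
      w'.GE = {X | ∃ Y ∈ w.GE, ∃ (i : X ⟶ (genSubcat B).trW.Q.obj Y)
          (r : (genSubcat B).trW.Q.obj Y ⟶ X), i ≫ r = 𝟙 X} ∧
      (∀ X ∈ w.LE, (genSubcat B).trW.Q.obj X ∈ w'.LE) ∧
      (∀ X ∈ w.GE, (genSubcat B).trW.Q.obj X ∈ w'.GE) := by
  let Q := (genSubcat B).trW.Q
  have hmapid : ∀ {X Y : (genSubcat B).trW.Localization} (i : X ⟶ Y) (r : Y ⟶ X) (n : ℤ),
      i ≫ r = 𝟙 X → i⟦n⟧' ≫ r⟦n⟧' = 𝟙 (X⟦n⟧) := by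
    intro X Y i r n h
    rw [← Functor.map_comp, h, CategoryTheory.Functor.map_id]
  refine ⟨⟨_, _, ?_, ?_, ?_, ?_, ?_, ?_⟩, rfl, rfl,
    fun X hX => ⟨X, hX, 𝟙 _, 𝟙 _, by simp⟩, fun X hX => ⟨X, hX, 𝟙 _, 𝟙 _, by simp⟩⟩
  · rintro X Y ⟨Z, hZ, i', r', h'⟩ i r h
    exact ⟨Z, hZ, i ≫ i', r' ≫ r, by simp [reassoc_of% h', h]⟩
  · rintro X Y ⟨Z, hZ, i', r', h'⟩ i r h
    exact ⟨Z, hZ, i ≫ i', r' ≫ r, by simp [reassoc_of% h', h]⟩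
  · rintro X ⟨Z, hZ, i, r, h⟩
    let e := (Q.commShiftIso (-1 : ℤ)).app Z
    refine ⟨Z⟦(-1 : ℤ)⟧, w.shift_LE _ hZ, i⟦(-1 : ℤ)⟧' ≫ e.inv, e.hom ≫ r⟦(-1 : ℤ)⟧', ?_⟩
    rw [Category.assoc, e.inv_hom_id_assoc]
    exact hmapid _ _ _ h
  · rintro X ⟨Z, hZ, i, r, h⟩
    let e := (Q.commShiftIso (1 : ℤ)).app Z
    refine ⟨Z⟦(1 : ℤ)⟧, w.shift_GE _ hZ, i⟦(1 : ℤ)⟧' ≫ e.inv, e.hom ≫ r⟦(1 : ℤ)⟧', ?_⟩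
    rw [Category.assoc, e.inv_hom_id_assoc]
    exact hmapid _ _ _ h
  · rintro X ⟨X', hX, i, r, h⟩ Y ⟨Y', hY, i', r', h'⟩ f
    let e := (Q.commShiftIso (1 : ℤ)).app Y'
    have h0 := w.Q_orth B hB ((w.le_zero_iff X').2 hX)
      ((w.ge_shift Y' 1 1 0 (by lia)).2 ((w.ge_zero_iff Y').2 hY))
      (r ≫ f ≫ i'⟦(1 : ℤ)⟧' ≫ e.inv)
    have h1 : f = i ≫ (r ≫ f ≫ i'⟦(1 : ℤ)⟧' ≫ e.inv) ≫ e.hom ≫ r'⟦(1 : ℤ)⟧' := by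
      simp only [Category.assoc, e.inv_hom_id_assoc]
      rw [reassoc_of% h]
      have h2 : i'⟦(1 : ℤ)⟧' ≫ r'⟦(1 : ℤ)⟧' = 𝟙 (Y⟦(1 : ℤ)⟧) := hmapid _ _ _ h'
      erw [h2, Category.comp_id]
    rw [h1, h0, zero_comp, comp_zero]
  · intro M
    let eM := Q.objObjPreimageIso M
    obtain ⟨X, Y, a, b, c, hT, hX, hY⟩ := w.decomposition (Q.objPreimage M)
    have hT' := Q.map_distinguished _ hT
    refine ⟨Q.obj X, Q.obj Y, Q.map a ≫ eM.hom, eM.inv ≫ Q.map b,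
      Q.map c ≫ (Q.commShiftIso (1 : ℤ)).hom.app X, ?_, ⟨X, hX, 𝟙 _, 𝟙 _, by simp⟩, ?_⟩
    · exact WeightStructure.dist_iso_mid eM _ _ _ hT'
    · let e := (Q.commShiftIso (-1 : ℤ)).app Y
      exact ⟨Y⟦(-1 : ℤ)⟧, hY, e.inv, e.hom, e.inv_hom_id⟩
end
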